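/- Let X be a finite m-almost quasigroup quandle such that for each a ∈ X the stabilizer S_a is a trivial subquandle of X. For 1 ≤ j ≤ n define D_n^j : C_n^R(X) → C_{n+1}^R(X) on generators x = (x_1,…,x_n) by D_n^j(x) = Σ_{k=1}^m Σ_{y∈X} (x_j^{(k)},…,x_j^{(k)}, y, x_{j+1},…,x_n), where the first j entries equal x_j^{(k)}. Then ∂_{n+1}∘D_n^j + D_{n−1}^j∘∂_n = (−1)^{j+1}(|X|·g_2^j − m·g_s^j) as maps C_n^R(X) → C_n^R(X). -/

import Mathlib

/-- The `n`-th rack chain group: the free abelian group on `n`-tuples of `X`. -/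
abbrev RackChain (X : Type) (n : ℕ) : Type := FreeAbelianGroup (Fin n → X)

/-- The face map `d_i^{(*_0)}` deleting the `i`-th entry (0-indexed). -/
def dZero {X : Type} (n : ℕ) (i : Fin (n + 1)) (x : Fin (n + 1) → X) :
    Fin n → X :=
  fun j => if (j : ℕ) < (i : ℕ) then x j.castSucc else x j.succ

/-- The face map `d_i^{(*)}`: entries before position `i` are acted on by `x i`
and the `i`-th entry is deleted (0-indexed). -/
def dStar {X : Type} (op : X → X → X) (n : ℕ) (i : Fin (n + 1))
    (x : Fin (n + 1) → X) : Fin n → X :=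
  fun j => if (j : ℕ) < (i : ℕ) then op (x j.castSucc) (x i) else x j.succ

/-- The rack boundary `∂_{n+1} : C_{n+1}^R(X) → C_n^R(X)`,
`∂(x) = Σ_{i=1}^{n+1} (-1)^i (d_i^{(*_0)} x - d_i^{(*)} x)` (with `i` 1-based). -/
def rackBoundary {X : Type} (op : X → X → X) (n : ℕ) :
    RackChain X (n + 1) →+ RackChain X n :=
  FreeAbelianGroup.lift fun x =>
    ∑ i : Fin (n + 1), ((-1 : ℤ) ^ ((i : ℕ) + 1)) •
      (FreeAbelianGroup.of (dZero n i x) - FreeAbelianGroup.of (dStar op n i x))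

/-- The group of rack `(n+1)`-cycles. -/
def rackCycles {X : Type} (op : X → X → X) (n : ℕ) :
    AddSubgroup (RackChain X (n + 1)) :=
  (rackBoundary op n).ker

/-- The group of rack `(n+1)`-boundaries, viewed inside the cycles. -/
def rackBoundaries {X : Type} (op : X → X → X) (n : ℕ) :
    AddSubgroup (rackCycles op n) :=
  ((rackBoundary op (n + 1)).range).addSubgroupOf (rackCycles op n)

/-- The `(n+1)`-st rack homology group `H_{n+1}^R(X)` (so `n = 0` gives `H_1`). -/
def rackHomology {X : Type} (op : X → X → X) (n : ℕ) : Type :=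
  rackCycles (X := X) op n ⧸ rackBoundaries op n

instance {X : Type} (op : X → X → X) (n : ℕ) :
    AddCommGroup (rackHomology op n) :=
  QuotientAddGroup.Quotient.addCommGroup _
/-- The stabilizer `S_a = {x | a * x = a}` as a finset. -/
def stabF {X : Type} [Fintype X] [DecidableEq X] (op : X → X → X) (a : X) :
    Finset X :=
  Finset.univ.filter fun y => op a y = a

/-- The chain map `g_1^j` (`j` is 1-based, `1 ≤ j ≤ n`; zero otherwise):
`g_1^j(x) = Σ_{k ∈ S_{x_j}} (k, …, k, x_j, x_{j+1}, …, x_n)`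
(the first `j-1` entries equal `k`). -/
def g1map {X : Type} [Fintype X] [DecidableEq X] (op : X → X → X) (n j : ℕ) :
    RackChain X n →+ RackChain X n :=
  FreeAbelianGroup.lift fun x =>
    if h : 1 ≤ j ∧ j ≤ n then
      ∑ k ∈ stabF op (x ⟨j - 1, by omega⟩),
        FreeAbelianGroup.of (fun i : Fin n => if (i : ℕ) < j - 1 then k else x i)
    else 0

/-- The chain map `g_2^j` (`j` is 1-based, `1 ≤ j ≤ n`; zero otherwise):
`g_2^j(x) = Σ_{k ∈ S_{x_j}} (k, …, k, x_{j+1}, …, x_n)`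
(the first `j` entries equal `k`). -/
def g2map {X : Type} [Fintype X] [DecidableEq X] (op : X → X → X) (n j : ℕ) :
    RackChain X n →+ RackChain X n :=
  FreeAbelianGroup.lift fun x =>
    if h : 1 ≤ j ∧ j ≤ n then
      ∑ k ∈ stabF op (x ⟨j - 1, by omega⟩),
        FreeAbelianGroup.of (fun i : Fin n => if (i : ℕ) < j then k else x i)
    else 0

/-- The chain map `g_0^j` (`j` is 1-based, `1 ≤ j ≤ n`; zero otherwise):
`g_0^j(x) = Σ_{k ∈ S_{x_j}} (x_j, …, x_j, k, x_{j+1}, …, x_n)`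
(the first `j-1` entries equal `x_j`, the `j`-th entry is `k`). -/
def g0map {X : Type} [Fintype X] [DecidableEq X] (op : X → X → X) (n j : ℕ) :
    RackChain X n →+ RackChain X n :=
  FreeAbelianGroup.lift fun x =>
    if h : 1 ≤ j ∧ j ≤ n then
      ∑ k ∈ stabF op (x ⟨j - 1, by omega⟩),
        FreeAbelianGroup.of (fun i : Fin n =>
          if (i : ℕ) < j - 1 then x ⟨j - 1, by omega⟩
          else if (i : ℕ) = j - 1 then k else x i)
    else 0

/-- The symmetrizer chain map `g_s^j` (`j` is 1-based):
`g_s^j(x) = Σ_{y ∈ X} (y, …, y, x_{j+1}, …, x_n)` (the first `j` entries equal `y`). -/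
def gsmap {X : Type} [Fintype X] [DecidableEq X] (op : X → X → X) (n j : ℕ) :
    RackChain X n →+ RackChain X n :=
  FreeAbelianGroup.lift fun x =>
    ∑ y : X, FreeAbelianGroup.of (fun i : Fin n => if (i : ℕ) < j then y else x i)

/-- The chain homotopy `D_n^j` (`j` 1-based, `1 ≤ j ≤ n`; zero otherwise):
`D_n^j(x) = Σ_{k ∈ S_{x_j}} Σ_{y ∈ X} (k, …, k, y, x_{j+1}, …, x_n)`
(the first `j` entries equal `k`, then `y`). -/
def Dmap {X : Type} [Fintype X] [DecidableEq X] (op : X → X → X) (n j : ℕ) :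
    RackChain X n →+ RackChain X (n + 1) :=
  FreeAbelianGroup.lift fun x =>
    if h : 1 ≤ j ∧ j ≤ n then
      ∑ k ∈ stabF op (x ⟨j - 1, by omega⟩), ∑ y : X,
        FreeAbelianGroup.of (fun i : Fin (n + 1) =>
          if (i : ℕ) < j then k
          else if (i : ℕ) = j then y
          else x ⟨(i : ℕ) - 1, by have := i.isLt; omega⟩)
    else 0

theorem mem_stabF' {X : Type} [Fintype X] [DecidableEq X] (op : X → X → X) (a y : X) :
    y ∈ stabF op a ↔ op a y = a := by
  simp [stabF]

/-- The generator appearing in `Dmap`. -/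
def wtup {X : Type} (n j : ℕ) (hj : 1 ≤ j) (x : Fin n → X) (k y : X) (hjn : j ≤ n) :
    Fin (n + 1) → X := fun i =>
  if (i : ℕ) < j then k
  else if (i : ℕ) = j then y
  else x ⟨(i : ℕ) - 1, by have := i.isLt; omega⟩

theorem Dmap_of {X : Type} [Fintype X] [DecidableEq X] (op : X → X → X) (n j : ℕ)
    (hj : 1 ≤ j) (hjn : j ≤ n) (x : Fin n → X) :
    Dmap op n j (FreeAbelianGroup.of x) =
      ∑ k ∈ stabF op (x ⟨j - 1, by omega⟩), ∑ y : X,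
        FreeAbelianGroup.of (wtup n j hj x k y hjn) := by
  simp only [Dmap, FreeAbelianGroup.lift_apply_of]
  rw [dif_pos ⟨hj, hjn⟩]
  rfl

theorem Dmap_of_zero {X : Type} [Fintype X] [DecidableEq X] (op : X → X → X) (n j : ℕ)
    (hjn : ¬ j ≤ n) (x : Fin n → X) :
    Dmap op n j (FreeAbelianGroup.of x) = 0 := by
  simp only [Dmap, FreeAbelianGroup.lift_apply_of]
  rw [dif_neg (fun h => hjn h.2)]

theorem Dmap_congr {X : Type} [Fintype X] [DecidableEq X] (op : X → X → X) (n j : ℕ)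
    (hj : 1 ≤ j) (z z' : Fin n → X) (h : ∀ l : Fin n, j - 1 ≤ (l : ℕ) → z l = z' l) :
    Dmap op n j (FreeAbelianGroup.of z) = Dmap op n j (FreeAbelianGroup.of z') := by
  by_cases hjn : j ≤ n
  · rw [Dmap_of op n j hj hjn, Dmap_of op n j hj hjn, h _ le_rfl]
    refine Finset.sum_congr rfl fun k _ => Finset.sum_congr rfl fun y _ => ?_
    congr 1
    funext i
    unfold wtup
    split_ifs with h1 h2
    · rfl
    · rfl
    · exact h _ (by simp only; omega)
  · rw [Dmap_of_zero op n j hjn, Dmap_of_zero op n j hjn]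

theorem stab_eq {X : Type} [Fintype X] [DecidableEq X] (op : X → X → X) (m : ℕ)
    (hstab : ∀ a : X, (stabF op a).card = m)
    (htriv : ∀ a x y : X, op a x = a → op a y = a → op x y = x)
    (a k : X) (hk : k ∈ stabF op a) : stabF op k = stabF op a := by
  symm
  apply Finset.eq_of_subset_of_card_le
  · intro x hx
    rw [mem_stabF'] at *
    exact htriv a k x hk hx
  · rw [hstab, hstab]

theorem sum_op {X : Type} [Fintype X] [DecidableEq X] (op : X → X → X) (m : ℕ)
    (hidem : ∀ a : X, op a a = a)
    (hstab : ∀ a : X, (stabF op a).card = m)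
    (hsol : ∀ a b : X, op a b ≠ a → ∃! x : X, op a x = b)
    {A : Type} [AddCommGroup A] (f : X → A) (k : X) :
    ∑ y, f (op k y) = (m : ℤ) • f k + (∑ y, f y - ∑ y ∈ stabF op k, f y) := by
  classical
  have h1 : ∑ y ∈ stabF op k, f (op k y) = (m : ℤ) • f k := by
    rw [Finset.sum_congr rfl (g := fun _ => f k)]
    · simp [hstab]
    · intro y hy
      rw [(mem_stabF' op k y).1 hy]
  have himg : (stabF op k)ᶜ ⊆ ((stabF op k)ᶜ).image (op k) := by
    intro b hb
    simp only [Finset.mem_compl, mem_stabF'] at hb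
    obtain ⟨x, hx, -⟩ := hsol k b hb
    simp only [Finset.mem_image, Finset.mem_compl, mem_stabF']
    refine ⟨x, ?_, hx⟩
    intro h
    apply hb
    rw [← hx, h, hidem]
  have hcard : ((stabF op k)ᶜ).image (op k) = (stabF op k)ᶜ :=
    (Finset.eq_of_subset_of_card_le himg Finset.card_image_le).symm
  have hinj : Set.InjOn (op k) ((stabF op k)ᶜ : Finset X) := by
    rw [← Finset.card_image_iff, hcard]
  have h2 : ∑ y ∈ (stabF op k)ᶜ, f (op k y) = ∑ y ∈ (stabF op k)ᶜ, f y := by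
    conv_rhs => rw [← hcard]
    rw [Finset.sum_image hinj]
  rw [← Finset.sum_add_sum_compl (stabF op k) (fun y => f (op k y)), h1, h2,
    ← Finset.sum_add_sum_compl (stabF op k) f]
  abel

theorem sum_sum_op {X : Type} [Fintype X] [DecidableEq X] (op : X → X → X) (m : ℕ)
    (hidem : ∀ a : X, op a a = a)
    (hstab : ∀ a : X, (stabF op a).card = m)
    (hsol : ∀ a b : X, op a b ≠ a → ∃! x : X, op a x = b)
    (htriv : ∀ a x y : X, op a x = a → op a y = a → op x y = x)
    {A : Type} [AddCommGroup A] (f : X → A) (a : X) :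
    ∑ k ∈ stabF op a, ∑ y, f (op k y) = (m : ℤ) • ∑ y, f y := by
  have : ∀ k ∈ stabF op a, ∑ y, f (op k y)
      = (m : ℤ) • f k + (∑ y, f y - ∑ y ∈ stabF op a, f y) := by
    intro k hk
    rw [sum_op op m hidem hstab hsol, stab_eq op m hstab htriv a k hk]
  rw [Finset.sum_congr rfl this, Finset.sum_add_distrib, Finset.sum_const, hstab,
    ← Finset.smul_sum, smul_sub, natCast_zsmul, natCast_zsmul]
  abel

theorem sum_stab_op {X : Type} [Fintype X] [DecidableEq X] (op : X → X → X)
    (hbij : ∀ b : X, Function.Bijective fun x => op x b)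
    (hdist : ∀ a b c : X, op (op a b) c = op (op a c) (op b c))
    {A : Type} [AddCommGroup A] (f : X → A) (a b : X) :
    ∑ k ∈ stabF op (op a b), f k = ∑ k ∈ stabF op a, f (op k b) := by
  symm
  refine Finset.sum_bij (fun k _ => op k b) ?_ ?_ ?_ ?_
  · intro k hk
    rw [mem_stabF'] at *
    rw [← hdist, hk]
  · intro k _ k' _ h
    exact (hbij b).1 h
  · intro k hk
    obtain ⟨l, hl⟩ := (hbij b).2 k
    simp only at hl
    refine ⟨l, ?_, hl⟩
    rw [mem_stabF'] at *
    rw [← hl, ← hdist] at hk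
    exact (hbij b).1 hk
  · intros
    rfl

/-- For a finite `m`-almost quasigroup quandle `X` with all
stabilizers trivial subquandles,
`∂_{n+1}∘D_n^j + D_{n-1}^j∘∂_n = (−1)^{j+1}(|X|·g_2^j − m·g_s^j)`
as maps `C_n^R(X) → C_n^R(X)` (for `1 ≤ j ≤ n`). -/
theorem mAQ_Dmap_homotopy
    {X : Type} [Fintype X] [DecidableEq X] (op : X → X → X) (m : ℕ)
    (hm : 1 ≤ m)
    (hidem : ∀ a : X, op a a = a)
    (hbij : ∀ b : X, Function.Bijective fun x => op x b)
    (hdist : ∀ a b c : X, op (op a b) c = op (op a c) (op b c))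
    (hstab : ∀ a : X, (stabF op a).card = m)
    (hsol : ∀ a b : X, op a b ≠ a → ∃! x : X, op a x = b)
    (htriv : ∀ a x y : X, op a x = a → op a y = a → op x y = x) :
    ∀ (n j : ℕ), 1 ≤ j → j ≤ n + 1 →
      ∀ c : RackChain X (n + 1),
        rackBoundary op (n + 1) (Dmap op (n + 1) j c)
            + Dmap op n j (rackBoundary op n c)
          = ((-1 : ℤ) ^ (j + 1)) •
              ((Fintype.card X : ℤ) • g2map op (n + 1) j c
                - (m : ℤ) • gsmap op (n + 1) j c) := by
  intro n j hj hjn c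
  induction c using FreeAbelianGroup.induction_on with
  | zero => simp
  | neg x h =>
    simp only [map_neg, smul_neg]
    rw [← neg_add, h, ← smul_neg]
    congr 1
    abel
  | add x y hx hy =>
    simp only [map_add, smul_add]
    rw [add_add_add_comm, hx, hy, ← smul_add]
    congr 1
    abel
  | of x =>
    have hg2 : g2map op (n + 1) j (FreeAbelianGroup.of x) =
        ∑ k ∈ stabF op (x ⟨j - 1, by omega⟩), FreeAbelianGroup.of
          (fun i : Fin (n + 1) => if (i : ℕ) < j then k else x i) := by
      simp only [g2map, FreeAbelianGroup.lift_apply_of]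
      rw [dif_pos ⟨hj, hjn⟩]
    have hgs : gsmap op (n + 1) j (FreeAbelianGroup.of x) =
        ∑ y : X, FreeAbelianGroup.of
          (fun i : Fin (n + 1) => if (i : ℕ) < j then y else x i) := by
      simp only [gsmap, FreeAbelianGroup.lift_apply_of]
    have hbd : ∀ (N : ℕ) (z : Fin (N + 1) → X),
        rackBoundary op N (FreeAbelianGroup.of z) = ∑ i : Fin (N + 1), ((-1 : ℤ) ^ ((i : ℕ) + 1)) •
      (FreeAbelianGroup.of (dZero N i z) - FreeAbelianGroup.of (dStar op N i z)) := by
      intro N z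
      simp only [rackBoundary, FreeAbelianGroup.lift_apply_of]
    have hF : rackBoundary op (n + 1) (Dmap op (n + 1) j (FreeAbelianGroup.of x)) =
        ∑ i : Fin (n + 2), ((-1 : ℤ) ^ ((i : ℕ) + 1)) •
          ∑ k ∈ stabF op (x ⟨j - 1, by omega⟩), ∑ y : X,
          (FreeAbelianGroup.of (dZero (n + 1) i (wtup (n + 1) j hj x k y hjn))
            - FreeAbelianGroup.of (dStar op (n + 1) i (wtup (n + 1) j hj x k y hjn))) := by
      rw [Dmap_of op (n + 1) j hj hjn]
      simp only [map_sum, hbd, Finset.smul_sum]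
      rw [Finset.sum_comm]
      rw [Finset.sum_congr rfl fun y _ => Finset.sum_comm]
      rw [Finset.sum_comm]
      refine Finset.sum_congr rfl fun i _ => ?_
      rw [Finset.sum_comm]
    have hG : Dmap op n j (rackBoundary op n (FreeAbelianGroup.of x)) =
        ∑ i : Fin (n + 1), ((-1 : ℤ) ^ ((i : ℕ) + 1)) •
          (Dmap op n j (FreeAbelianGroup.of (dZero n i x))
            - Dmap op n j (FreeAbelianGroup.of (dStar op n i x))) := by
      simp only [hbd, map_sum, map_zsmul, map_sub]
    rw [hF, hG, Fin.sum_univ_succAbove _ (⟨j, by omega⟩ : Fin (n + 2)), add_assoc,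
      ← Finset.sum_add_distrib,
      Finset.sum_eq_zero (s := (Finset.univ : Finset (Fin (n + 1)))), add_zero]
    · simp only
      congr 1
      simp only [Finset.sum_sub_distrib]
      congr 1
      · rw [hg2, Finset.smul_sum]
        refine Finset.sum_congr rfl fun k _ => ?_
        rw [Finset.sum_congr rfl (g := fun _ => FreeAbelianGroup.of
          (fun i : Fin (n + 1) => if (i : ℕ) < j then k else x i))]
        · simp
        · intro y _
          congr 1
          funext l
          simp only [dZero, wtup, Fin.val_castSucc, Fin.val_succ]
          split_ifs <;> first | rfl | omega
      · rw [hgs, ← sum_sum_op op m hidem hstab hsol htriv _ (x ⟨j - 1, by omega⟩)]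
        refine Finset.sum_congr rfl fun k _ => Finset.sum_congr rfl fun y _ => ?_
        congr 1
        funext l
        simp only [dStar, wtup, Fin.val_castSucc, Fin.val_succ]
        split_ifs <;> first | rfl | omega
    · intro i _
      by_cases hij : (i : ℕ) < j
      · have hs : (⟨j, by omega⟩ : Fin (n + 2)).succAbove i = i.castSucc :=
          Fin.succAbove_of_castSucc_lt _ _ (by simpa [Fin.lt_def] using hij)
        rw [hs, Dmap_congr op n j hj (dZero n i x) (dStar op n i x), sub_self, smul_zero,
          add_zero, Finset.sum_eq_zero, smul_zero]
        · intro k _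
          refine Finset.sum_eq_zero fun y _ => ?_
          rw [sub_eq_zero]
          congr 1
          funext l
          simp only [dZero, dStar, wtup, Fin.val_castSucc, Fin.val_succ]
          split_ifs <;> first | rfl | omega | (rw [hidem])
        · intro l hl
          simp only [dZero, dStar]
          rw [if_neg (by omega), if_neg (by omega)]
      · have hs : (⟨j, by omega⟩ : Fin (n + 2)).succAbove i = i.succ :=
          Fin.succAbove_of_le_castSucc _ _ (by simpa [Fin.le_def] using hij)
        have hi := i.isLt
        have hjn' : j ≤ n := by omega
        rw [hs, Fin.val_succ, pow_succ _ ((i : ℕ) + 1), mul_neg_one, neg_smul, neg_add_eq_zero]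
        congr 1
        simp only [Finset.sum_sub_distrib]
        congr 1
        · rw [Dmap_of op n j hj hjn']
          have e : dZero n i x ⟨j - 1, by omega⟩ = x ⟨j - 1, by omega⟩ := by
            simp only [dZero]
            rw [if_pos (by omega)]
            rfl
          rw [e]
          refine Finset.sum_congr rfl fun k _ => Finset.sum_congr rfl fun y _ => ?_
          congr 1
          funext l
          simp only [dZero, wtup, Fin.val_castSucc, Fin.val_succ]
          split_ifs <;> first | rfl | omega | (congr 1; ext; simp; try omega)
        · rw [Dmap_of op n j hj hjn']
          have e : dStar op n i x ⟨j - 1, by omega⟩ = op (x ⟨j - 1, by omega⟩) (x i) := by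
            simp only [dStar]
            rw [if_pos (by omega)]
            rfl
          rw [e, sum_stab_op op hbij hdist]
          refine Finset.sum_congr rfl fun k _ => ?_
          conv_rhs => rw [← (hbij (x i)).sum_comp]
          refine Finset.sum_congr rfl fun y _ => ?_
          congr 1
          funext l
          have ew : wtup (n + 1) j hj x k y hjn i.succ = x i := by
            simp only [wtup, Fin.val_succ]
            rw [if_neg (by omega), if_neg (by omega)]
            rfl
          simp only [dStar, ew]
          simp only [wtup, Fin.val_castSucc, Fin.val_succ]
          split_ifs <;> first | rfl | omega | skip
          · simp only [dStar]
            rw [if_pos (by omega)]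
            rfl
          · simp only [dStar]
            rw [if_neg (by omega)]
            congr 1
            ext
            simp
            omega
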